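/- Every completely nonunitary C₀-semigroup of isometries V on a complex Hilbert space H is unitarily equivalent to the right-shift semigroup S^F on L²(ℝ₊, F) for some complex Hilbert space F; that is, there exist a Hilbert space F and a unitary U : H → L²(ℝ₊, F) with U V_t U* = S_t^F for all t ≥ 0. -/

import Mathlib

open MeasureTheory ContinuousLinearMap
open scoped ENNReal NNReal InnerProductSpace ComplexInnerProductSpace

noncomputable section

section SemigroupDefs

variable {G : Type} [NormedAddCommGroup G] [InnerProductSpace ℂ G] [CompleteSpace G]

/-- A (C₀-) strongly continuous one-parameter semigroup of bounded operators. -/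
def IsC0Semigroup (V : ℝ≥0 → G →L[ℂ] G) : Prop :=
  V 0 = 1 ∧ (∀ s t : ℝ≥0, V (s + t) = V s ∘L V t) ∧ ∀ x : G, Continuous fun t : ℝ≥0 => V t x

/-- A C₀-semigroup of isometries. -/
def IsIsometrySemigroup (V : ℝ≥0 → G →L[ℂ] G) : Prop :=
  IsC0Semigroup V ∧ ∀ (t : ℝ≥0) (x : G), ‖V t x‖ = ‖x‖

/-- The closed subspace `L` reduces the semigroup `V`: it is invariant under every `V t`
and every `(V t)*`. -/
def ReducedBy (V : ℝ≥0 → G →L[ℂ] G) (L : Submodule ℂ G) : Prop :=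
  (∀ t : ℝ≥0, ∀ x ∈ L, V t x ∈ L) ∧ ∀ t : ℝ≥0, ∀ x ∈ L, adjoint (V t) x ∈ L

/-- `T` restricts to a unitary operator on the subspace `L`. -/
def RestrictsToUnitaryOn (T : G →L[ℂ] G) (L : Submodule ℂ G) : Prop :=
  (∀ x ∈ L, T x ∈ L) ∧ (∀ x ∈ L, ‖T x‖ = ‖x‖) ∧ ∀ y ∈ L, ∃ x ∈ L, T x = y

/-- Every `V t` restricts to a unitary operator on the subspace `L`. -/
def IsUnitarySemigroupOn (V : ℝ≥0 → G →L[ℂ] G) (L : Submodule ℂ G) : Prop :=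
  ∀ t : ℝ≥0, RestrictsToUnitaryOn (V t) L

/-- A unitary C₀-semigroup: every `V t` is a surjective isometry. -/
def IsUnitarySemigroup (V : ℝ≥0 → G →L[ℂ] G) : Prop :=
  IsC0Semigroup V ∧ ∀ t : ℝ≥0, (∀ x : G, ‖V t x‖ = ‖x‖) ∧ Function.Surjective (V t)

/-- `V` is completely nonunitary on the subspace `K`: there is no nonzero closed subspace
of `K` reducing `V` on which every `V t` restricts to a unitary. -/
def IsCnuOn (V : ℝ≥0 → G →L[ℂ] G) (K : Submodule ℂ G) : Prop :=
  ∀ L : Submodule ℂ G, IsClosed (L : Set G) → L ≤ K → ReducedBy V L →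
    IsUnitarySemigroupOn V L → L = ⊥

/-- A completely nonunitary semigroup. -/
def IsCnu (V : ℝ≥0 → G →L[ℂ] G) : Prop := IsCnuOn V ⊤

/-- Two semigroups commute. -/
def SgCommute (V1 V2 : ℝ≥0 → G →L[ℂ] G) : Prop :=
  ∀ t s : ℝ≥0, V1 t ∘L V2 s = V2 s ∘L V1 t

/-- Two semigroups doubly commute. -/
def SgDoublyCommute (V1 V2 : ℝ≥0 → G →L[ℂ] G) : Prop :=
  SgCommute V1 V2 ∧ ∀ t s : ℝ≥0, V1 t ∘L adjoint (V2 s) = adjoint (V2 s) ∘L V1 t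

/-- A completely nonunitary pair of semigroups: no nonzero closed subspace reduces both
semigroups in such a way that both restrict to unitary semigroups. -/
def IsCnuPair (V1 V2 : ℝ≥0 → G →L[ℂ] G) : Prop :=
  ∀ L : Submodule ℂ G, IsClosed (L : Set G) → ReducedBy V1 L → ReducedBy V2 L →
    IsUnitarySemigroupOn V1 L → IsUnitarySemigroupOn V2 L → L = ⊥

/-- A strongly continuous one-parameter unitary group. -/
def IsUnitaryGroup (U : ℝ → G →L[ℂ] G) : Prop :=
  U 0 = 1 ∧ (∀ s t : ℝ, U (s + t) = U s ∘L U t) ∧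
  (∀ (t : ℝ) (x : G), ‖U t x‖ = ‖x‖) ∧ (∀ t : ℝ, Function.Surjective (U t)) ∧
  ∀ x : G, Continuous fun t : ℝ => U t x

/-- Two subspaces are mutually orthogonal. -/
def OrthoSubspaces (A B : Submodule ℂ G) : Prop :=
  ∀ x ∈ A, ∀ y ∈ B, ⟪x, y⟫_ℂ = 0

end SemigroupDefs

/-- Lebesgue measure restricted to `ℝ₊ = [0, ∞)`; `Lp F 2 rplus` plays the role of
`L²(ℝ₊, F)`. -/
def rplus : Measure ℝ := (volume : Measure ℝ).restrict (Set.Ici 0)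

/-- `T` is the right shift by `t` on `L²(ℝ₊, F)`:
`(T f)(x) = f (x - t)` for `x ≥ t` and `(T f)(x) = 0` otherwise. -/
def IsRightShiftOp (F : Type) [NormedAddCommGroup F] [InnerProductSpace ℂ F]
    (t : ℝ) (T : Lp F 2 rplus →L[ℂ] Lp F 2 rplus) : Prop :=
  ∀ f : Lp F 2 rplus,
    (T f : ℝ → F) =ᵐ[rplus] fun x => if t ≤ x then (f : ℝ → F) (x - t) else 0

set_option linter.unusedSectionVars false

theorem exists_hilbert_of_core (M : Type) [AddCommGroup M] [Module ℂ M]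
    (c : PreInnerProductSpace.Core ℂ M) :
    ∃ (F : Type) (_ : NormedAddCommGroup F) (_ : InnerProductSpace ℂ F) (_ : CompleteSpace F)
      (j : M →ₗ[ℂ] F), DenseRange j ∧ ∀ x y, ⟪j x, j y⟫_ℂ = c.inner x y := by
  let i1 : SeminormedAddCommGroup M := InnerProductSpace.Core.toSeminormedAddCommGroup (𝕜 := ℂ) (c := c)
  let i2 : InnerProductSpace ℂ M := InnerProductSpace.ofCore c
  refine ⟨UniformSpace.Completion M, inferInstance, inferInstance, inferInstance,
    (UniformSpace.Completion.toComplL (𝕜 := ℂ) (E := M)).toLinearMap, ?_, ?_⟩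
  · exact UniformSpace.Completion.denseRange_coe
  · intro x y
    exact UniformSpace.Completion.inner_coe x y

structure Sg {H : Type} [NormedAddCommGroup H] [InnerProductSpace ℂ H]
    (T : ℝ → H →L[ℂ] H) : Prop where
  zero : T 0 = 1
  add : ∀ s t : ℝ, 0 ≤ s → 0 ≤ t → ∀ x, T (s + t) x = T s (T t x)
  cont : ∀ x, Continuous fun s => T s x
  contr : ∀ s x, ‖T s x‖ ≤ ‖x‖
  lim : ∀ x, Filter.Tendsto (fun s => T s x) Filter.atTop (nhds 0)

section
variable {H : Type} [NormedAddCommGroup H] [InnerProductSpace ℂ H] [CompleteSpace H]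
  {T : ℝ → H →L[ℂ] H}

def DD (hT : Sg T) : Submodule ℂ (H × H) where
  carrier := {p | ∀ t : ℝ, 0 ≤ t → T t p.1 = p.1 + ∫ s in (0:ℝ)..t, T s p.2}
  zero_mem' := by intro t ht; simp
  add_mem' := by
    intro p q hp hq t ht
    have := hp t ht
    have := hq t ht
    simp only [Prod.fst_add, Prod.snd_add, map_add]
    rw [intervalIntegral.integral_add ((hT.cont _).intervalIntegrable _ _)
      ((hT.cont _).intervalIntegrable _ _), hp t ht, hq t ht]
    abel
  smul_mem' := by
    intro c p hp t ht
    simp only [Prod.smul_fst, Prod.smul_snd, map_smul]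
    rw [intervalIntegral.integral_smul, hp t ht, smul_add]

theorem DD_inv (hT : Sg T) {p : H × H} (hp : p ∈ DD hT) {r : ℝ} (hr : 0 ≤ r) :
    ((T r p.1, T r p.2) : H × H) ∈ DD hT := by
  intro t ht
  simp only
  rw [← hT.add t r ht hr, add_comm, hT.add r t hr ht, hp t ht, map_add,
    ← ContinuousLinearMap.intervalIntegral_comp_comm _ ((hT.cont _).intervalIntegrable _ _)]
  congr 1
  apply intervalIntegral.integral_congr
  intro s hs
  rw [Set.uIcc_of_le ht] at hs
  simp only
  rw [← hT.add r s hr hs.1, add_comm, hT.add s r hs.1 hr]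

def DDT (hT : Sg T) (r : ℝ) : DD hT →ₗ[ℂ] DD hT where
  toFun p := ⟨(T (max r 0) p.1.1, T (max r 0) p.1.2), DD_inv hT p.2 (le_max_right _ _)⟩
  map_add' p q := by ext <;> simp
  map_smul' c p := by ext <;> simp

theorem DDT_cont (hT : Sg T) (p : DD hT) : Continuous fun r => DDT hT r p := by
  refine Continuous.subtype_mk ?_ _
  have hm : Continuous fun r : ℝ => max r 0 := by fun_prop
  exact ((hT.cont _).comp hm).prodMk ((hT.cont _).comp hm)

theorem DD_deriv (hT : Sg T) {p : H × H} (hp : p ∈ DD hT) {s : ℝ} (hs : 0 < s) :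
    HasDerivAt (fun s => T s p.1) (T s p.2) s := by
  have h1 : HasDerivAt (fun t => p.1 + ∫ s in (0:ℝ)..t, T s p.2) (T s p.2) s :=
    (intervalIntegral.integral_hasDerivAt_right ((hT.cont _).intervalIntegrable _ _)
      ((hT.cont _).stronglyMeasurableAtFilter _ _) (hT.cont _).continuousAt).const_add _
  refine h1.congr_of_eventuallyEq ?_
  filter_upwards [lt_mem_nhds hs] with t ht
  exact hp t ht.le

theorem DD_normsq_deriv (hT : Sg T) {p : H × H} (hp : p ∈ DD hT) {s : ℝ} (hs : 0 < s) :
    HasDerivAt (fun s => ‖T s p.1‖ ^ 2) (2 * (⟪T s p.1, T s p.2⟫_ℂ).re) s := by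
  let : InnerProductSpace ℝ H := InnerProductSpace.rclikeToReal ℂ H
  have := (DD_deriv hT hp hs).norm_sq
  exact this

theorem norm_anti (hT : Sg T) (x : H) {s t : ℝ} (hs : 0 ≤ s) (hst : s ≤ t) :
    ‖T t x‖ ≤ ‖T s x‖ := by
  have := hT.add (t - s) s (by linarith) hs x
  rw [sub_add_cancel] at this
  rw [this]; exact hT.contr _ _

theorem DD_nonpos' (hT : Sg T) {p : H × H} (hp : p ∈ DD hT) {s : ℝ} (hs : 0 < s) :
    (⟪T s p.1, T s p.2⟫_ℂ).re ≤ 0 := by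
  have h := DD_normsq_deriv hT hp hs
  have h2 := h.hasDerivWithinAt (s := Set.Ioi s)
  rw [hasDerivWithinAt_iff_tendsto_slope' (by simp)] at h2
  have : 2 * (⟪T s p.1, T s p.2⟫_ℂ).re ≤ 0 := by
    refine le_of_tendsto h2 ?_
    filter_upwards [self_mem_nhdsWithin] with t ht
    rw [slope_def_field]
    apply div_nonpos_of_nonpos_of_nonneg
    · have := norm_anti hT p.1 hs.le (le_of_lt ht)
      have := pow_le_pow_left₀ (norm_nonneg _) this 2
      linarith
    · have : s < t := ht
      linarith
  linarith

theorem DD_nonpos (hT : Sg T) {p : H × H} (hp : p ∈ DD hT) :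
    (⟪p.1, p.2⟫_ℂ).re ≤ 0 := by
  have hc : Continuous fun s => (⟪T s p.1, T s p.2⟫_ℂ).re :=
    Complex.continuous_re.comp ((hT.cont _).inner (hT.cont _))
  have h0 := (hc.tendsto 0).mono_left (nhdsWithin_le_nhds (s := Set.Ioi 0))
  have : (⟪T 0 p.1, T 0 p.2⟫_ℂ).re ≤ 0 := by
    refine le_of_tendsto h0 ?_
    filter_upwards [self_mem_nhdsWithin] with t ht
    exact DD_nonpos' hT hp ht
  simpa [hT.zero] using this

theorem DD_dense (hT : Sg T) : DenseRange fun p : DD hT => p.1.1 := by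
  intro x
  have hcx := hT.cont x
  have hd : HasDerivAt (fun t => ∫ s in (0:ℝ)..t, T s x) (T 0 x) 0 :=
    intervalIntegral.integral_hasDerivAt_right (hcx.intervalIntegrable _ _)
      (hcx.stronglyMeasurableAtFilter _ _) hcx.continuousAt
  have h2 := hd.hasDerivWithinAt (s := Set.Ioi 0)
  rw [hasDerivWithinAt_iff_tendsto_slope' (by simp)] at h2
  have h00 : T 0 x = x := by simp [hT.zero]
  rw [h00] at h2
  refine mem_closure_of_tendsto h2 ?_
  filter_upwards [self_mem_nhdsWithin] with h hh
  have hh : 0 < h := hh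
  have key : ((∫ s in (0:ℝ)..h, T s x, T h x - x) : H × H) ∈ DD hT := by
    intro t ht
    simp only [map_sub]
    have hi : ∀ a b, IntervalIntegrable (fun s => T s x) volume a b :=
      fun a b => hcx.intervalIntegrable _ _
    rw [← ContinuousLinearMap.intervalIntegral_comp_comm _ (hi _ _)]
    have e1 : ∫ s in (0:ℝ)..h, T t (T s x) = ∫ s in (0:ℝ)..h, T (s + t) x := by
      apply intervalIntegral.integral_congr
      intro s hs
      rw [Set.uIcc_of_le hh.le] at hs
      simp only
      rw [add_comm, hT.add t s ht hs.1]
    have e2 : ∫ s in (0:ℝ)..t, (T s (T h x) - T s x) =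
        (∫ s in (0:ℝ)..t, T (s + h) x) - ∫ s in (0:ℝ)..t, T s x := by
      rw [← intervalIntegral.integral_sub]
      · apply intervalIntegral.integral_congr
        intro s hs
        rw [Set.uIcc_of_le ht] at hs
        simp only
        rw [hT.add s h hs.1 hh.le]
      · exact (hcx.comp (continuous_add_const h)).intervalIntegrable _ _
      · exact hi _ _
    rw [e1, e2, intervalIntegral.integral_comp_add_right (fun s => T s x),
      intervalIntegral.integral_comp_add_right (fun s => T s x)]
    simp only [zero_add]
    have a1 := intervalIntegral.integral_add_adjacent_intervals (hi 0 h) (hi h (t+h))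
    have a2 := intervalIntegral.integral_add_adjacent_intervals (hi 0 t) (hi t (t+h))
    rw [add_comm h t, ← add_sub_assoc, a1, ← a2]
    abel
  refine ⟨((h⁻¹ : ℝ) : ℂ) • ⟨_, key⟩, ?_⟩
  simp only [slope_def_module, intervalIntegral.integral_same, sub_zero, Submodule.coe_smul, Prod.smul_fst]
  exact Complex.coe_smul _ _

@[reducible]
def ecore (hT : Sg T) : PreInnerProductSpace.Core ℂ (DD hT) where
  inner p q := -(⟪p.1.1, q.1.2⟫_ℂ + ⟪p.1.2, q.1.1⟫_ℂ)
  conj_inner_symm p q := by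
    simp only [map_neg, map_add, inner_conj_symm]; ring
  re_inner_nonneg p := by
    have := DD_nonpos hT p.2
    have h2 := inner_re_symm (𝕜 := ℂ) p.1.1 p.1.2
    simp only [RCLike.re_eq_complex_re] at h2 ⊢
    simp only [Complex.neg_re, Complex.add_re]
    linarith
  add_left p q r := by
    simp; ring
  smul_left p q c := by
    simp; ring
end

section
variable {H : Type} [NormedAddCommGroup H] [InnerProductSpace ℂ H] [CompleteSpace H]
  {T : ℝ → H →L[ℂ] H}
  {F : Type} [NormedAddCommGroup F] [InnerProductSpace ℂ F] [CompleteSpace F]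

theorem norm_j_sq (hT : Sg T) (j : DD hT →ₗ[ℂ] F)
    (hj : ∀ x y, ⟪j x, j y⟫_ℂ = (ecore hT).inner x y) (p : DD hT) :
    ‖j p‖ ^ 2 = - (2 * (⟪p.1.1, p.1.2⟫_ℂ).re) := by
  have h1 := hj p p
  have h2 := inner_self_eq_norm_sq (𝕜 := ℂ) (j p)
  rw [← h2, h1]
  have h3 := inner_re_symm (𝕜 := ℂ) p.1.1 p.1.2
  simp only [RCLike.re_eq_complex_re] at h3 ⊢
  change (-(⟪p.1.1, p.1.2⟫_ℂ + ⟪p.1.2, p.1.1⟫_ℂ)).re = _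
  rw [Complex.neg_re, Complex.add_re]
  linarith

theorem j_cont (hT : Sg T) (j : DD hT →ₗ[ℂ] F)
    (hj : ∀ x y, ⟪j x, j y⟫_ℂ = (ecore hT).inner x y) : Continuous j := by
  refine AddMonoidHomClass.continuous_of_bound j 2 ?_
  intro p
  have h1 := norm_j_sq hT j hj p
  have h2 : |(⟪p.1.1, p.1.2⟫_ℂ).re| ≤ ‖p.1.1‖ * ‖p.1.2‖ :=
    (Complex.abs_re_le_norm _).trans (norm_inner_le_norm _ _)
  have h3 : ‖p.1.1‖ ≤ ‖p‖ := norm_fst_le p.1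
  have h4 : ‖p.1.2‖ ≤ ‖p‖ := norm_snd_le p.1
  have h5 := neg_le_of_abs_le h2
  have h6 := mul_le_mul h3 h4 (norm_nonneg _) (norm_nonneg _)
  refine abs_le_of_sq_le_sq' ?_ (by positivity) |>.2
  nlinarith [sq_nonneg ‖p‖]

theorem u_normsq (hT : Sg T) (j : DD hT →ₗ[ℂ] F)
    (hj : ∀ x y, ⟪j x, j y⟫_ℂ = (ecore hT).inner x y) (p : DD hT) {s : ℝ} (hs : 0 ≤ s) :
    ‖j (DDT hT s p)‖ ^ 2 = - (2 * (⟪T s p.1.1, T s p.1.2⟫_ℂ).re) := by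
  rw [norm_j_sq hT j hj]
  simp [DDT, max_eq_left hs]

theorem u_cont (hT : Sg T) (j : DD hT →ₗ[ℂ] F)
    (hj : ∀ x y, ⟪j x, j y⟫_ℂ = (ecore hT).inner x y) (p : DD hT) :
    Continuous fun s => j (DDT hT s p) :=
  (j_cont hT j hj).comp (DDT_cont hT p)

theorem u_int (hT : Sg T) (j : DD hT →ₗ[ℂ] F)
    (hj : ∀ x y, ⟪j x, j y⟫_ℂ = (ecore hT).inner x y) (p : DD hT) :
    Integrable (fun s => ‖j (DDT hT s p)‖ ^ 2) rplus ∧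
    ∫ s, ‖j (DDT hT s p)‖ ^ 2 ∂rplus = ‖p.1.1‖ ^ 2 := by
  have hc : ContinuousWithinAt (fun s => ‖T s p.1.1‖ ^ 2) (Set.Ici 0) 0 :=
    ((hT.cont p.1.1).norm.pow 2).continuousWithinAt
  have hd : ∀ s ∈ Set.Ioi (0:ℝ), HasDerivAt (fun s => ‖T s p.1.1‖ ^ 2)
      (- ‖j (DDT hT s p)‖ ^ 2) s := by
    intro s hs
    rw [u_normsq hT j hj p (le_of_lt hs), neg_neg]
    exact DD_normsq_deriv hT p.2 hs
  have hn : ∀ s ∈ Set.Ioi (0:ℝ), - ‖j (DDT hT s p)‖ ^ 2 ≤ 0 := fun s _ => by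
    have := sq_nonneg ‖j (DDT hT s p)‖
    linarith
  have hl : Filter.Tendsto (fun s => ‖T s p.1.1‖ ^ 2) Filter.atTop (nhds 0) := by
    simpa using ((hT.lim p.1.1).norm.pow 2)
  have h1 := integrableOn_Ioi_deriv_of_nonpos hc hd hn hl
  have h2 := integral_Ioi_of_hasDerivAt_of_nonpos hc hd hn hl
  have hr : rplus = volume.restrict (Set.Ioi 0) := by
    rw [rplus, restrict_Ioi_eq_restrict_Ici]
  rw [hr]
  refine ⟨by simpa [IntegrableOn] using h1.neg, ?_⟩
  rw [integral_neg] at h2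
  simpa [hT.zero] using h2

theorem u_memLp (hT : Sg T) (j : DD hT →ₗ[ℂ] F)
    (hj : ∀ x y, ⟪j x, j y⟫_ℂ = (ecore hT).inner x y) (p : DD hT) :
    MemLp (fun s => j (DDT hT s p)) 2 rplus :=
  (memLp_two_iff_integrable_sq_norm (u_cont hT j hj p).aestronglyMeasurable).2
    (u_int hT j hj p).1

def U0 (hT : Sg T) (j : DD hT →ₗ[ℂ] F)
    (hj : ∀ x y, ⟪j x, j y⟫_ℂ = (ecore hT).inner x y) : DD hT →ₗ[ℂ] Lp F 2 rplus where
  toFun p := (u_memLp hT j hj p).toLp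
  map_add' p q := by
    rw [← MemLp.toLp_add]
    congr 1
    ext s; simp
  map_smul' c p := by
    simp only [RingHom.id_apply]
    rw [← MemLp.toLp_const_smul]
    congr 1
    ext s; simp

theorem norm_sq_Lp (f : Lp F 2 rplus) : ‖f‖ ^ 2 = ∫ s, ‖f s‖ ^ 2 ∂rplus := by
  rw [← inner_self_eq_norm_sq (𝕜 := ℂ), L2.inner_def, ← integral_re]
  · simp only [inner_self_eq_norm_sq]
  · exact L2.integrable_inner f f

theorem U0_norm (hT : Sg T) (j : DD hT →ₗ[ℂ] F)
    (hj : ∀ x y, ⟪j x, j y⟫_ℂ = (ecore hT).inner x y) (p : DD hT) :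
    ‖U0 hT j hj p‖ = ‖p.1.1‖ := by
  rw [← sq_eq_sq₀ (norm_nonneg _) (norm_nonneg _), norm_sq_Lp, ← (u_int hT j hj p).2]
  apply integral_congr_ae
  filter_upwards [(u_memLp hT j hj p).coeFn_toLp] with s hs
  rw [← hs]; rfl

theorem exists_U (hT : Sg T) (j : DD hT →ₗ[ℂ] F)
    (hj : ∀ x y, ⟪j x, j y⟫_ℂ = (ecore hT).inner x y) :
    ∃ U : H →ₗᵢ[ℂ] Lp F 2 rplus, ∀ p : DD hT, U p.1.1 = U0 hT j hj p := by
  let e : DD hT →ₗ[ℂ] H := (LinearMap.fst ℂ H H).comp (DD hT).subtype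
  have hd : DenseRange e := DD_dense hT
  have hn : ∀ p, ‖U0 hT j hj p‖ ≤ 1 * ‖e p‖ := fun p => by
    rw [U0_norm, one_mul]; rfl
  have he := LinearMap.extendOfNorm_eq hd ⟨1, hn⟩
  refine ⟨⟨((U0 hT j hj).extendOfNorm e).toLinearMap, ?_⟩, he⟩
  intro x
  refine hd.induction_on (p := fun x => ‖((U0 hT j hj).extendOfNorm e) x‖ = ‖x‖) x ?_ ?_
  · exact isClosed_eq (by fun_prop) (by fun_prop)
  · intro p
    rw [he, U0_norm]; rfl

end

section shift
variable {F : Type} [NormedAddCommGroup F] [InnerProductSpace ℂ F] [CompleteSpace F]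

def sh (t : ℝ) (f : ℝ → F) : ℝ → F := fun y => if t ≤ y then f (y - t) else 0

theorem sh_eq (t : ℝ) (f : ℝ → F) :
    sh t f = (Set.Ici t).indicator (fun y => f (y - t)) := by
  ext y; simp [sh, Set.indicator]

theorem mp_sub (t : ℝ) : MeasurePreserving (fun y : ℝ => y - t)
    (volume.restrict (Set.Ici t)) rplus := by
  have h := (measurePreserving_sub_right (volume : Measure ℝ) t).restrict_preimage
    (s := Set.Ici 0) measurableSet_Ici
  have : (fun y : ℝ => y - t) ⁻¹' Set.Ici 0 = Set.Ici t := by ext y; simp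
  rw [this] at h
  exact h

theorem rplus_restrict {t : ℝ} (ht : 0 ≤ t) :
    rplus.restrict (Set.Ici t) = volume.restrict (Set.Ici t) := by
  rw [rplus, Measure.restrict_restrict measurableSet_Ici]
  congr 1
  ext y; simp; intro h; linarith

theorem sh_congr {t : ℝ} (ht : 0 ≤ t) {f g : ℝ → F} (h : f =ᵐ[rplus] g) :
    sh t f =ᵐ[rplus] sh t g := by
  have h1 := (mp_sub t).quasiMeasurePreserving.ae_eq_comp h
  rw [← rplus_restrict ht] at h1
  have h2 := (ae_restrict_iff' measurableSet_Ici).1 h1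
  filter_upwards [h2] with s hs
  by_cases hst : t ≤ s
  · simpa [sh, hst] using hs hst
  · simp [sh, hst]

theorem sh_norm {t : ℝ} (ht : 0 ≤ t) {f : ℝ → F} (hf : AEStronglyMeasurable f rplus) :
    eLpNorm (sh t f) 2 rplus = eLpNorm f 2 rplus := by
  rw [sh_eq, eLpNorm_indicator_eq_eLpNorm_restrict measurableSet_Ici, rplus_restrict ht]
  exact eLpNorm_comp_measurePreserving hf (mp_sub t)

theorem sh_memLp {t : ℝ} (ht : 0 ≤ t) {f : ℝ → F} (hf : MemLp f 2 rplus) :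
    MemLp (sh t f) 2 rplus := by
  rw [sh_eq]
  apply (memLp_indicator_iff_restrict measurableSet_Ici).2
  rw [rplus_restrict ht]
  exact hf.comp_measurePreserving (mp_sub t)

theorem exists_shift {t : ℝ} (ht : 0 ≤ t) : ∃ R : Lp F 2 rplus →ₗᵢ[ℂ] Lp F 2 rplus,
    ∀ f, R f =ᵐ[rplus] sh t f := by
  refine ⟨⟨{ toFun := fun f => (sh_memLp ht (Lp.memLp f)).toLp
             map_add' := ?_
             map_smul' := ?_ }, ?_⟩, ?_⟩
  · intro f g
    rw [← MemLp.toLp_add]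
    apply MemLp.toLp_congr
    refine (sh_congr ht (Lp.coeFn_add f g)).trans (Filter.EventuallyEq.of_eq ?_)
    ext s; simp only [sh, Pi.add_apply]; split_ifs <;> simp
  · intro c f
    simp only [RingHom.id_apply]
    rw [← MemLp.toLp_const_smul]
    apply MemLp.toLp_congr
    refine (sh_congr ht (Lp.coeFn_smul c f)).trans (Filter.EventuallyEq.of_eq ?_)
    ext s; simp only [sh, Pi.smul_apply]; split_ifs <;> simp
  · intro f
    simp only [LinearMap.coe_mk, AddHom.coe_mk]
    rw [Lp.norm_toLp, sh_norm ht (Lp.aestronglyMeasurable f)]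
    rfl
  · intro f
    exact MemLp.coeFn_toLp (sh_memLp ht (Lp.memLp f))

theorem shift_inner {t : ℝ} (ht : 0 ≤ t) (R : Lp F 2 rplus →ₗᵢ[ℂ] Lp F 2 rplus)
    (hR : ∀ f, R f =ᵐ[rplus] sh t f) (f h k : Lp F 2 rplus) (h' k' : ℝ → F)
    (hh : h =ᵐ[rplus] h') (hk : k =ᵐ[rplus] k') (hhk : ∀ s, 0 ≤ s → h' (s + t) = k' s) :
    ⟪R f, h⟫_ℂ = ⟪f, k⟫_ℂ := by
  rw [L2.inner_def, L2.inner_def]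
  have e1 : ∫ s, ⟪R f s, h s⟫_ℂ ∂rplus =
      ∫ s, (Set.Ici t).indicator (fun s => ⟪f (s - t), k' (s - t)⟫_ℂ) s ∂rplus := by
    apply integral_congr_ae
    filter_upwards [hR f, hh] with s h1 h2
    rw [h1, h2]
    by_cases hs : t ≤ s
    · have := hhk (s - t) (by linarith)
      rw [sub_add_cancel] at this
      simp [sh, hs, this]
    · simp [sh, hs]
  have e2 : ∫ s, ⟪f s, k s⟫_ℂ ∂rplus = ∫ s, ⟪f s, k' s⟫_ℂ ∂rplus := by
    apply integral_congr_ae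
    filter_upwards [hk] with s h1
    rw [h1]
  rw [e1, e2, integral_indicator measurableSet_Ici, rplus_restrict ht]
  exact (mp_sub t).integral_comp (Homeomorph.subRight t).measurableEmbedding
    (fun s => ⟪f s, k' s⟫_ℂ)

end shift

theorem isom_range {E : Type} [NormedAddCommGroup E] [InnerProductSpace ℂ E] [CompleteSpace E]
    (R : E →ₗᵢ[ℂ] E) (f g : E) (h : ∀ k, ⟪R k, f⟫_ℂ = ⟪k, g⟫_ℂ) (hn : ‖f‖ = ‖g‖) : R g = f := by
  have h1 := h g
  rw [← sub_eq_zero, ← norm_eq_zero, ← sq_eq_zero_iff, @norm_sub_sq ℂ, R.norm_map, h1,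
    inner_self_eq_norm_sq, hn]
  ring

theorem lebesgue_zero {F : Type} [NormedAddCommGroup F] [InnerProductSpace ℂ F] [CompleteSpace F]
    (G w : ℝ → F) (hG : LocallyIntegrable G volume) (hw : Continuous w) (a : ℝ)
    (h1 : HasDerivAt (fun x => ∫ s in a..x, G s) (G a) a)
    (h2 : HasDerivAt (fun x => ∫ s in a..x, ‖G s‖) ‖G a‖ a)
    (h0 : ∀ x, a < x → ∫ s in a..x, ⟪w (s - a), G s⟫_ℂ = 0) : ⟪w 0, G a⟫_ℂ = 0 := by
  have hi : ∀ x y, IntervalIntegrable G volume x y := fun x y =>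
    intervalIntegrable_iff.mpr <|
      (hG.integrableOn_isCompact isCompact_uIcc).mono_set Set.uIoc_subset_uIcc
  have h1' : Filter.Tendsto (fun x => ‖⟪w 0, slope (fun x => ∫ s in a..x, G s) a x⟫_ℂ‖)
      (nhdsWithin a (Set.Ioi a)) (nhds ‖⟪w 0, G a⟫_ℂ‖) := by
    have := (h1.hasDerivWithinAt (s := Set.Ioi a))
    rw [hasDerivWithinAt_iff_tendsto_slope' (by simp)] at this
    exact (tendsto_const_nhds.inner this).norm
  have h2' : Filter.Tendsto (slope (fun x => ∫ s in a..x, ‖G s‖) a)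
      (nhdsWithin a (Set.Ioi a)) (nhds ‖G a‖) := by
    have := (h2.hasDerivWithinAt (s := Set.Ioi a))
    rwa [hasDerivWithinAt_iff_tendsto_slope' (by simp)] at this
  have key : ∀ ε > 0, ‖⟪w 0, G a⟫_ℂ‖ ≤ ε * ‖G a‖ := by
    intro ε hε
    refine le_of_tendsto_of_tendsto h1' (h2'.const_mul ε) ?_
    obtain ⟨δ, hδ, hwδ⟩ := Metric.continuousAt_iff.1 hw.continuousAt ε hε
    filter_upwards [Ioo_mem_nhdsGT (show a < a + δ by linarith)] with x hx
    have hbd : ∀ s ∈ Set.Ioc a x, ‖⟪w 0 - w (s - a), G s⟫_ℂ‖ ≤ ε * ‖G s‖ := by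
      intro s hs
      refine (norm_inner_le_norm _ _).trans (mul_le_mul_of_nonneg_right ?_ (norm_nonneg _))
      have : dist (s - a) 0 < δ := by
        rw [Real.dist_eq, sub_zero, abs_of_nonneg (by linarith [hs.1])]
        linarith [hs.2, hx.2]
      have := hwδ this
      rw [dist_comm, dist_eq_norm] at this
      exact this.le
    have hni : IntervalIntegrable (fun s => ε * ‖G s‖) volume a x := (hi a x).norm.const_mul ε
    have hint : IntervalIntegrable (fun s => ⟪w 0 - w (s - a), G s⟫_ℂ) volume a x := by
      refine hni.mono_fun' ?_ ?_
      · refine AEStronglyMeasurable.inner ?_ (hi a x).aestronglyMeasurable_restrict_uIoc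
        exact (Continuous.aestronglyMeasurable (by fun_prop))
      · rw [Set.uIoc_of_le hx.1.le]
        exact (ae_restrict_iff' measurableSet_Ioc).2 (Filter.Eventually.of_forall hbd)
    have e1 : ⟪w 0, ∫ s in a..x, G s⟫_ℂ = ∫ s in a..x, ⟪w 0, G s⟫_ℂ :=
      ((innerSL ℂ (w 0)).intervalIntegral_comp_comm (hi a x)).symm
    have hint0 : IntervalIntegrable (fun s => ⟪w 0, G s⟫_ℂ) volume a x :=
      ⟨(innerSL ℂ (w 0)).integrable_comp (hi a x).1, (innerSL ℂ (w 0)).integrable_comp (hi a x).2⟩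
    have e2 := h0 x hx.1
    have e3 : ∫ s in a..x, ⟪w (s - a), G s⟫_ℂ =
        (∫ s in a..x, ⟪w 0, G s⟫_ℂ) - ∫ s in a..x, ⟪w 0 - w (s - a), G s⟫_ℂ := by
      rw [← intervalIntegral.integral_sub hint0 hint]
      congr 1; ext s; rw [inner_sub_left]; ring
    rw [e3, ← e1, sub_eq_zero] at e2
    have e4 := intervalIntegral.norm_integral_le_of_norm_le hx.1.le
      (Filter.Eventually.of_forall hbd) hni
    rw [← e2, intervalIntegral.integral_const_mul] at e4
    have hxa : 0 < (x - a)⁻¹ := inv_pos.2 (by linarith [hx.1])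
    simp only [slope_def_module, intervalIntegral.integral_same, sub_zero]
    rw [← Complex.coe_smul, inner_smul_right, norm_mul, smul_eq_mul, Complex.norm_real,
      Real.norm_of_nonneg hxa.le, mul_left_comm]
    exact mul_le_mul_of_nonneg_left e4 hxa.le
  rw [← norm_eq_zero]
  refine le_antisymm (le_of_forall_pos_le_add fun η hη => ?_) (norm_nonneg _)
  have hp : 0 < ‖G a‖ + 1 := by positivity
  refine (key (η / (‖G a‖ + 1)) (by positivity)).trans ?_
  rw [zero_add, div_mul_eq_mul_div, div_le_iff₀ hp]
  nlinarith

section VV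
variable {H : Type} [NormedAddCommGroup H] [InnerProductSpace ℂ H] [CompleteSpace H]
  {V : ℝ≥0 → H →L[ℂ] H}

theorem adj_V (hV : IsIsometrySemigroup V) (t : ℝ≥0) (x : H) : adjoint (V t) (V t x) = x := by
  have := (ContinuousLinearMap.norm_map_iff_adjoint_comp_self (V t)).1 (hV.2 t)
  exact congrArg (fun A : H →L[ℂ] H => A x) this

theorem V_add (hV : IsIsometrySemigroup V) (s t : ℝ≥0) (x : H) : V (s + t) x = V s (V t x) := by
  rw [hV.1.2.1]; rfl

theorem adj_add (hV : IsIsometrySemigroup V) (s t : ℝ≥0) (x : H) :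
    adjoint (V (s + t)) x = adjoint (V s) (adjoint (V t) x) := by
  rw [add_comm, hV.1.2.1, adjoint_comp]; rfl

theorem adj_contr (hV : IsIsometrySemigroup V) (t : ℝ≥0) (x : H) : ‖adjoint (V t) x‖ ≤ ‖x‖ := by
  have h1 : ‖V t‖ ≤ 1 := (V t).opNorm_le_bound zero_le_one fun y => by rw [hV.2, one_mul]
  have h2 := (adjoint (V t)).le_opNorm x
  rw [LinearIsometryEquiv.norm_map] at h2
  exact h2.trans (mul_le_of_le_one_left (norm_nonneg _) h1)

theorem adj_cont (hV : IsIsometrySemigroup V) (x : H) :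
    Continuous fun t => adjoint (V t) x := by
  have hb : ∀ s t : ℝ≥0, s ≤ t → ‖adjoint (V t) x - adjoint (V s) x‖ ≤ ‖x - V (nndist s t) x‖ := by
    intro s t hst
    obtain ⟨r, rfl⟩ := exists_add_of_le hst
    have hr : nndist s (s + r) = r := by
      rw [NNReal.nndist_eq]; simp
      exact hst.trans le_add_self
    rw [hr, adj_add hV, ← map_sub]
    refine (adj_contr hV _ _).trans ?_
    have : adjoint (V r) x - x = adjoint (V r) (x - V r x) := by
      rw [map_sub, adj_V hV]
    rw [this]
    exact adj_contr hV _ _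
  have hb' : ∀ s t : ℝ≥0, ‖adjoint (V t) x - adjoint (V s) x‖ ≤ ‖x - V (nndist t s) x‖ := by
    intro s t
    rcases le_total s t with h | h
    · rw [nndist_comm]; exact hb s t h
    · rw [norm_sub_rev]; exact hb t s h
  rw [continuous_iff_continuousAt]
  intro s
  rw [ContinuousAt, tendsto_iff_norm_sub_tendsto_zero]
  refine squeeze_zero (fun _ => norm_nonneg _) (hb' s) ?_
  have hc : Continuous fun t => ‖x - V (nndist t s) x‖ :=
    (continuous_const.sub ((hV.1.2.2 x).comp (continuous_id.nndist continuous_const))).norm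
  have := hc.tendsto s
  simpa [hV.1.1] using this

def LL (V : ℝ≥0 → H →L[ℂ] H) : Submodule ℂ H where
  carrier := {x | ∀ t, V t (adjoint (V t) x) = x}
  zero_mem' := by intro t; simp
  add_mem' := by intro x y hx hy t; simp [hx t, hy t]
  smul_mem' := by intro c x hx t; simp [hx t]

theorem LL_bot (hV : IsIsometrySemigroup V) (hcnu : IsCnu V) : LL V = ⊥ := by
  have hinv : ∀ t : ℝ≥0, ∀ x ∈ LL V, V t x ∈ LL V := by
    intro s x hx t
    have h1 : V s x = V t (V s (adjoint (V t) x)) := by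
      rw [← V_add hV, add_comm, V_add hV, hx t]
    rw [h1, adj_V hV]
  have hinv2 : ∀ t : ℝ≥0, ∀ x ∈ LL V, adjoint (V t) x ∈ LL V := by
    intro s x hx t
    have h1 : adjoint (V s) x = V t (adjoint (V (s + t)) x) := by
      conv_lhs => rw [← hx (s + t), V_add hV, adj_V hV]
    rw [h1, adj_V hV]
  refine hcnu (LL V) ?_ le_top ⟨hinv, hinv2⟩ ?_
  · have : (LL V : Set H) = ⋂ t, {x | V t (adjoint (V t) x) = x} := by
      ext x; simp [LL]
    rw [this]
    exact isClosed_iInter fun t => isClosed_eq (by fun_prop) continuous_id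
  · intro t
    exact ⟨hinv t, fun x _ => hV.2 t x, fun y hy => ⟨_, hinv2 t y hy, hy t⟩⟩

theorem adj_lim (hV : IsIsometrySemigroup V) (hcnu : IsCnu V) (x : H) :
    Filter.Tendsto (fun t => adjoint (V t) x) Filter.atTop (nhds 0) := by
  let W : ℝ≥0 → Submodule ℂ H := fun t => (adjoint (V t)).ker
  have hWc : ∀ t, CompleteSpace (W t) := fun t =>
    ((adjoint (V t)).isClosed_ker).completeSpace_coe
  have hW : Monotone W := by
    intro s t hst y hy
    obtain ⟨r, rfl⟩ := exists_add_of_le hst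
    have hy' : adjoint (V s) y = 0 := hy
    change adjoint (V (s + r)) y = 0
    rw [add_comm, adj_add hV, hy', map_zero]
  have htop : ⊤ ≤ (⨆ t, W t).topologicalClosure := by
    rw [top_le_iff, Submodule.topologicalClosure_eq_top_iff, eq_bot_iff, ← LL_bot hV hcnu]
    intro y hy t
    have hz : y - V t (adjoint (V t) y) ∈ W t := by
      change adjoint (V t) _ = 0
      rw [map_sub, adj_V hV, sub_self]
    have hz2 := (Submodule.mem_orthogonal _ _).1 hy _ (Submodule.mem_iSup_of_mem t hz)
    have hz3 : ⟪y - V t (adjoint (V t) y), V t (adjoint (V t) y)⟫_ℂ = 0 := by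
      rw [← adjoint_inner_left]
      have : adjoint (V t) (y - V t (adjoint (V t) y)) = 0 := hz
      rw [this, inner_zero_left]
    have : y - V t (adjoint (V t) y) = 0 := by
      rw [← inner_self_eq_zero (𝕜 := ℂ), inner_sub_right, hz2, hz3, sub_zero]
    exact (sub_eq_zero.1 this).symm
  have h := Submodule.starProjection_tendsto_self W hW x htop
  have h2 : Filter.Tendsto (fun t => ‖x - (W t).starProjection x‖) Filter.atTop (nhds 0) := by
    simpa using (h.const_sub x).norm
  refine squeeze_zero_norm (fun t => ?_) h2
  have : adjoint (V t) ((W t).starProjection x) = 0 := (W t).starProjection_apply_mem x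
  have e : adjoint (V t) x = adjoint (V t) (x - (W t).starProjection x) := by
    rw [map_sub, this, sub_zero]
  rw [e]
  exact adj_contr hV _ _

theorem sg_of_V (hV : IsIsometrySemigroup V) (hcnu : IsCnu V) :
    Sg fun s : ℝ => adjoint (V s.toNNReal) where
  zero := by
    ext x
    have := adj_V hV 0 x
    have h2 : V 0 x = x := by rw [hV.1.1]; rfl
    rw [h2] at this
    simpa using this
  add s t hs ht x := by
    rw [Real.toNNReal_add hs ht, adj_add hV]
  cont x := (adj_cont hV x).comp continuous_real_toNNReal
  contr s x := adj_contr hV _ x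
  lim x := (adj_lim hV hcnu x).comp Real.tendsto_toNNReal_atTop
end VV

section final
variable {H : Type} [NormedAddCommGroup H] [InnerProductSpace ℂ H] [CompleteSpace H]
  {T : ℝ → H →L[ℂ] H}
  {F : Type} [NormedAddCommGroup F] [InnerProductSpace ℂ F] [CompleteSpace F]

theorem DDT_add (hT : Sg T) (p : DD hT) {s t : ℝ} (hs : 0 ≤ s) (ht : 0 ≤ t) :
    DDT hT (s + t) p = DDT hT s (DDT hT t p) := by
  ext <;> simp [DDT, max_eq_left hs, max_eq_left ht, max_eq_left (add_nonneg hs ht), hT.add s t hs ht]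

theorem DDT_zero (hT : Sg T) (p : DD hT) : DDT hT 0 p = p := by
  ext <;> simp [DDT, hT.zero]

theorem U_inter (hT : Sg T) (j : DD hT →ₗ[ℂ] F)
    (hj : ∀ x y, ⟪j x, j y⟫_ℂ = (ecore hT).inner x y)
    (U : H →ₗᵢ[ℂ] Lp F 2 rplus) (hU : ∀ p : DD hT, U p.1.1 = U0 hT j hj p)
    {t : ℝ} (ht : 0 ≤ t) (R : Lp F 2 rplus →ₗᵢ[ℂ] Lp F 2 rplus)
    (hR : ∀ f, R f =ᵐ[rplus] sh t f) (x : H) (k : Lp F 2 rplus) :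
    ⟪R k, U x⟫_ℂ = ⟪k, U (T t x)⟫_ℂ := by
  refine (DD_dense hT).induction_on (p := fun x => ⟪R k, U x⟫_ℂ = ⟪k, U (T t x)⟫_ℂ) x ?_ ?_
  · exact isClosed_eq (continuous_const.inner U.continuous)
      (continuous_const.inner (U.continuous.comp (T t).continuous))
  · intro p
    have e : T t p.1.1 = (DDT hT t p).1.1 := by simp [DDT, max_eq_left ht]
    rw [e, hU, hU]
    exact shift_inner ht R hR k _ _ (fun s => j (DDT hT s p)) (fun s => j (DDT hT s (DDT hT t p)))
      (u_memLp hT j hj p).coeFn_toLp (u_memLp hT j hj _).coeFn_toLp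
      (fun s hs => by rw [DDT_add hT p hs ht])

theorem U_surj (hT : Sg T) (j : DD hT →ₗ[ℂ] F) (hjd : DenseRange j)
    (hj : ∀ x y, ⟪j x, j y⟫_ℂ = (ecore hT).inner x y)
    (U : H →ₗᵢ[ℂ] Lp F 2 rplus) (hU : ∀ p : DD hT, U p.1.1 = U0 hT j hj p)
    (V : ℝ → H → H) (hVU : ∀ t, 0 ≤ t → ∀ x, U (V t x) =ᵐ[rplus] sh t (U x)) :
    Function.Surjective U := by
  have hc : IsClosed (LinearMap.range U.toLinearMap : Set (Lp F 2 rplus)) := by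
    have := U.isometry.isClosedEmbedding.isClosed_range
    exact this
  have : (LinearMap.range U.toLinearMap).HasOrthogonalProjection := by
    have := hc.completeSpace_coe
    infer_instance
  suffices h : LinearMap.range U.toLinearMap = ⊤ from LinearMap.range_eq_top.1 h
  rw [← Submodule.orthogonal_eq_bot_iff, eq_bot_iff]
  intro g hg
  have hg' : ∀ x, ⟪U x, g⟫_ℂ = 0 := fun x =>
    (Submodule.mem_orthogonal _ _).1 hg _ ⟨x, rfl⟩
  let G : ℝ → F := (Set.Ici (0:ℝ)).indicator g
  have hGm : MemLp G 2 volume := (memLp_indicator_iff_restrict measurableSet_Ici).2 (Lp.memLp g)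
  have hG : LocallyIntegrable G volume := hGm.locallyIntegrable (by norm_num)
  have d1 := _root_.LocallyIntegrable.ae_hasDerivAt_integral hG
  have d2 := _root_.LocallyIntegrable.ae_hasDerivAt_integral (hGm.norm.locallyIntegrable (by norm_num))
  change g = 0
  rw [Lp.eq_zero_iff_ae_eq_zero]
  have hz : ∀ᵐ a ∂volume, a ∈ Set.Ici (0:ℝ) → g a = 0 := by
    filter_upwards [d1, d2] with a h1 h2 ha
    have ha0 : (0:ℝ) ≤ a := ha
    have hGa : G a = g a := Set.indicator_of_mem ha _
    rw [← hGa]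
    refine hjd.induction_on (p := fun v => ⟪v, G a⟫_ℂ = 0) (G a)
      (isClosed_eq (continuous_id.inner continuous_const) continuous_const) ?_ |> inner_self_eq_zero.1
    intro p
    have hw := lebesgue_zero G (fun s => j (DDT hT s p)) hG (u_cont hT j hj p) a (h1 a) (h2 a) ?_
    · simpa only [DDT_zero] using hw
    intro x hx
    obtain ⟨b, hb, rfl⟩ : ∃ b, 0 ≤ b ∧ x = a + b := ⟨x - a, by linarith, by ring⟩
    have z1 : ⟪U (V a p.1.1) - U (V (a + b) (DDT hT b p).1.1), g⟫_ℂ = 0 := by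
      rw [inner_sub_left, hg', hg', sub_zero]
    rw [L2.inner_def] at z1
    have s1 := hVU a ha0 p.1.1
    have s2 := hVU (a + b) (by linarith) (DDT hT b p).1.1
    rw [hU] at s1 s2
    have s1' := s1.trans (sh_congr ha0 (u_memLp hT j hj p).coeFn_toLp)
    have s2' := s2.trans (sh_congr (t := a + b) (by linarith) (u_memLp hT j hj _).coeFn_toLp)
    have z2 : ∫ s, (Set.Ico a (a + b)).indicator (fun s => ⟪j (DDT hT (s - a) p), G s⟫_ℂ) s ∂rplus
        = 0 := by
      rw [← z1]
      apply integral_congr_ae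
      have hmem : ∀ᵐ s ∂rplus, s ∈ Set.Ici (0:ℝ) := ae_restrict_mem measurableSet_Ici
      filter_upwards [s1', s2', Lp.coeFn_sub (U (V a p.1.1)) (U (V (a + b) (DDT hT b p).1.1)),
        hmem] with s q1 q2 q3 q4
      rw [q3, Pi.sub_apply, q1, q2]
      have hGs : G s = g s := Set.indicator_of_mem q4 _
      by_cases hs1 : a ≤ s
      · by_cases hs2 : a + b ≤ s
        · have e : DDT hT (s - a) p = DDT hT (s - (a + b)) (DDT hT b p) := by
            rw [← DDT_add hT p (by linarith) hb]; congr 2; ring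
          simp [sh, hs1, hs2, e]
        · have : s < a + b := not_le.1 hs2
          simp [sh, hs1, hs2, this, hGs]
      · have hs2 : ¬ a + b ≤ s := by intro h; apply hs1; linarith
        simp [sh, hs1, hs2]
    have hsub : Set.Ico a (a + b) ⊆ Set.Ici 0 := fun s hs => ha0.trans hs.1
    rw [integral_indicator measurableSet_Ico, rplus, Measure.restrict_restrict measurableSet_Ico,
      Set.inter_eq_left.2 hsub, integral_Ico_eq_integral_Ioc] at z2
    rw [intervalIntegral.integral_of_le (by linarith)]
    exact z2
  exact (ae_restrict_iff' measurableSet_Ici).2 hz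

end final

/-- **Cooper's theorem (model part).** Every completely nonunitary C₀-semigroup of
isometries is unitarily equivalent to the right-shift semigroup on `L²(ℝ₊, F)` for some
Hilbert space `F`. -/
theorem cnu_semigroup_is_right_shift {H : Type} [NormedAddCommGroup H]
    [InnerProductSpace ℂ H] [CompleteSpace H] (V : ℝ≥0 → H →L[ℂ] H)
    (hV : IsIsometrySemigroup V) (hcnu : IsCnu V) :
    ∃ (F : Type) (_ : NormedAddCommGroup F) (_ : InnerProductSpace ℂ F) (_ : CompleteSpace F)
      (U : H ≃ₗᵢ[ℂ] Lp F 2 rplus),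
      ∀ (t : ℝ≥0) (x : H),
        (U (V t x) : ℝ → F) =ᵐ[rplus]
          fun y => if (t : ℝ) ≤ y then (U x : ℝ → F) (y - (t : ℝ)) else 0 := by
  have hT := sg_of_V hV hcnu
  obtain ⟨F, i1, i2, i3, j, hjd, hj⟩ := exists_hilbert_of_core (DD hT) (ecore hT)
  obtain ⟨U, hU⟩ := exists_U hT j hj
  have hVU : ∀ (t : ℝ≥0) (x : H), U (V t x) =ᵐ[rplus] sh (t : ℝ) (U x) := by
    intro t x
    obtain ⟨R, hR⟩ := exists_shift (F := F) t.2
    have e : R (U x) = U (V t x) := by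
      refine isom_range R _ _ (fun k => ?_) ?_
      · rw [U_inter hT j hj U hU t.2 R hR]
        congr 2
        have := adj_V hV t x
        simpa using this
      · rw [U.norm_map, U.norm_map, hV.2]
    rw [← e]
    exact hR (U x)
  have hs : Function.Surjective U := by
    refine U_surj hT j hjd hj U hU (fun t x => V t.toNNReal x) ?_
    intro t ht x
    have := hVU t.toNNReal x
    rwa [Real.coe_toNNReal t ht] at this
  refine ⟨F, i1, i2, i3, LinearIsometryEquiv.ofSurjective U hs, ?_⟩
  intro t x
  exact hVU t x
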